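/- Let g : ℝ → ℝ be twice continuously differentiable such that g, g' and g'' have at most polynomial growth. If ∫ g'(x) g'(−x) dγ(x) < 0, then there exists ρ ∈ (−1,1] with φ_g(ρ) < φ_g(−1); in particular the minimum of φ_g over [−1,1] is not attained at ρ = −1. -/

import Mathlib

open MeasureTheory ProbabilityTheory

/-- `h` has at most polynomial growth. -/
def PolyGrowth (h : ℝ → ℝ) : Prop :=
  ∃ C > (0 : ℝ), ∃ m : ℕ, ∀ x : ℝ, |h x| ≤ C * (1 + |x|) ^ m

/-- The correlation functional `φ_g`. -/
noncomputable def phiCorr (g : ℝ → ℝ) (ρ : ℝ) : ℝ :=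
  ∫ x, ∫ y, g x * g (ρ * x + Real.sqrt (1 - ρ ^ 2) * y)
    ∂(gaussianReal 0 1) ∂(gaussianReal 0 1)

/-!
Gaussian integration by parts gives Price's formula `φ_g' = φ_{g'}` on `(-1, 1)`: parametrise
`ρ = cos θ`, so that the pair `(X, Y)` of independent Gaussians is rotated into an independent pair
`(Z, W)` with `dZ/dθ = W`, and integrate by parts in `W`. Since `φ_{g'}` is continuous on
`[-1, 1]` and `φ_{g'}(-1) = ∫ g'(x) g'(-x) dγ(x) < 0`, the function `φ_g` is strictly decreasing
to the right of `-1`.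
-/

open Set Filter Topology
open scoped NNReal

local notation "γ²" => Measure.prod (gaussianReal 0 1) (gaussianReal 0 1)
local notation "rot" => ContinuousLinearMap.rotation

section GaussianMeasures

lemma integrable_one_add_norm_pow {E : Type*} [NormedAddCommGroup E] [NormedSpace ℝ E]
    [CompleteSpace E] [SecondCountableTopology E] [MeasurableSpace E] [BorelSpace E]
    (μ : Measure E) [IsGaussian μ] (m : ℕ) :
    Integrable (fun x ↦ (1 + ‖x‖) ^ m) μ := by
  have hnorm : MemLp (fun x : E ↦ ‖x‖) m μ :=
    (IsGaussian.memLp_id μ m (ENNReal.natCast_ne_top m)).norm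
  have hmem : MemLp (fun x : E ↦ 1 + ‖x‖) m μ := (memLp_const (1 : ℝ)).add hnorm
  have hint := hmem.integrable_norm_pow'
  have hnn (x : E) : ‖1 + ‖x‖‖ = 1 + ‖x‖ := Real.norm_of_nonneg (by positivity)
  simpa only [hnn] using hint

variable {μ : ℝ} {v : ℝ≥0}

lemma integrable_gaussianReal_iff {E : Type*} [NormedAddCommGroup E] [NormedSpace ℝ E]
    {f : ℝ → E} (hv : v ≠ 0) :
    Integrable f (gaussianReal μ v) ↔ Integrable (fun x ↦ gaussianPDFReal μ v x • f x) := by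
  rw [gaussianReal_of_var_ne_zero μ hv, integrable_withDensity_iff_integrable_smul'
    (measurable_gaussianPDF μ v) (ae_of_all _ fun _ ↦ gaussianPDF_lt_top)]
  simp only [toReal_gaussianPDF]

lemma hasDerivAt_gaussianPDFReal (μ : ℝ) (v : ℝ≥0) (x : ℝ) :
    HasDerivAt (gaussianPDFReal μ v) (-((x - μ) / v) * gaussianPDFReal μ v x) x := by
  have hexponent : HasDerivAt (fun x ↦ -(x - μ) ^ 2 / (2 * v)) (-((x - μ) / v)) x :=
    ((((hasDerivAt_id x).sub_const μ).pow 2).neg.div_const (2 * (v : ℝ))).congr_deriv (by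
      simp only [id_eq]
      ring)
  rw [gaussianPDFReal_def]
  exact (hexponent.exp.const_mul _).congr_deriv (by ring)

lemma integral_mul_sub_mean_gaussianReal {f f' : ℝ → ℝ} (hderiv : ∀ x, HasDerivAt f (f' x) x)
    (hf : Integrable f (gaussianReal μ v)) (hf' : Integrable f' (gaussianReal μ v))
    (hfx : Integrable (fun x ↦ f x * (x - μ)) (gaussianReal μ v)) :
    ∫ x, f x * (x - μ) ∂gaussianReal μ v = v * ∫ x, f' x ∂gaussianReal μ v := by
  rcases eq_or_ne v 0 with rfl | hv
  · simp
  rw [integrable_gaussianReal_iff hv] at hf hf' hfx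
  have hparts := integral_mul_deriv_eq_deriv_mul_of_integrable (fun x _ ↦ hderiv x)
    (fun x _ ↦ hasDerivAt_gaussianPDFReal μ v x)
    ((hfx.const_mul (-(v : ℝ)⁻¹)).congr (ae_of_all _ fun x ↦ by
      simp only [Pi.mul_apply, smul_eq_mul]
      ring))
    (hf'.congr (ae_of_all _ fun x ↦ mul_comm _ _)) (hf.congr (ae_of_all _ fun x ↦ mul_comm _ _))
  simp only [integral_gaussianReal_eq_integral_smul hv, smul_eq_mul]
  calc ∫ x, gaussianPDFReal μ v x * (f x * (x - μ))
      = -v * ∫ x, f x * (-((x - μ) / v) * gaussianPDFReal μ v x) := by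
        rw [← integral_const_mul]
        congr with x
        field_simp
    _ = v * ∫ x, gaussianPDFReal μ v x * f' x := by
        simp only [hparts, neg_mul_neg, mul_comm]

end GaussianMeasures

namespace PolyGrowth

variable {f g h : ℝ → ℝ}

lemma const (c : ℝ) : PolyGrowth fun _ ↦ c :=
  ⟨|c| + 1, by positivity, 0, fun x ↦ by simp⟩

lemma affine (a b : ℝ) : PolyGrowth fun x ↦ a + b * x := by
  refine ⟨|a| + |b| + 1, by positivity, 1, fun x ↦ ?_⟩
  calc |a + b * x| ≤ |a| + |b| * |x| := (abs_add_le _ _).trans_eq (by rw [abs_mul])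
    _ ≤ (|a| + |b| + 1) * (1 + |x|) ^ 1 := by
        nlinarith [abs_nonneg a, abs_nonneg b, abs_nonneg x,
          mul_nonneg (abs_nonneg a) (abs_nonneg x)]

lemma id : PolyGrowth fun x ↦ x := by
  simpa using affine 0 1

lemma mul (hf : PolyGrowth f) (hg : PolyGrowth g) : PolyGrowth fun x ↦ f x * g x := by
  obtain ⟨C, hC, m, hf⟩ := hf
  obtain ⟨D, hD, n, hg⟩ := hg
  refine ⟨C * D, by positivity, m + n, fun x ↦ ?_⟩
  calc |f x * g x| = |f x| * |g x| := abs_mul _ _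
    _ ≤ (C * (1 + |x|) ^ m) * (D * (1 + |x|) ^ n) := by gcongr <;> apply_assumption
    _ = C * D * (1 + |x|) ^ (m + n) := by ring

lemma comp (hf : PolyGrowth f) (hg : PolyGrowth g) : PolyGrowth fun x ↦ f (g x) := by
  obtain ⟨C, hC, m, hf⟩ := hf
  obtain ⟨D, hD, n, hg⟩ := hg
  refine ⟨C * (1 + D) ^ m, by positivity, n * m, fun x ↦ ?_⟩
  have hpow : 1 ≤ (1 + |x|) ^ n := one_le_pow₀ (by simp)
  calc |f (g x)| ≤ C * (1 + |g x|) ^ m := hf _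
    _ ≤ C * ((1 + D) * (1 + |x|) ^ n) ^ m := by
        gcongr
        linarith only [hg x, hpow]
    _ = C * (1 + D) ^ m * (1 + |x|) ^ (n * m) := by rw [mul_pow, pow_mul, mul_assoc]

lemma of_deriv (hf : Differentiable ℝ f) (hf' : PolyGrowth (deriv f)) : PolyGrowth f := by
  obtain ⟨C, hC, m, hf'⟩ := hf'
  refine ⟨|f 0| + C, by positivity, m + 1, fun x ↦ ?_⟩
  have hbound : ∀ y ∈ Metric.closedBall (0 : ℝ) |x|, ‖deriv f y‖ ≤ C * (1 + |x|) ^ m :=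
    fun y hy ↦ (hf' y).trans (by gcongr C * (1 + ?_) ^ m; simpa using hy)
  have hincr : |f x - f 0| ≤ C * (1 + |x|) ^ m * |x| := by
    simpa using (convex_closedBall (0 : ℝ) |x|).norm_image_sub_le_of_norm_deriv_le
      (fun y _ ↦ hf y) hbound (x := 0) (y := x) (by simp) (by simp)
  have hpow : 1 ≤ (1 + |x|) ^ (m + 1) := one_le_pow₀ (by simp)
  calc |f x| ≤ |f 0| + |f x - f 0| := by simpa using abs_add_le (f 0) (f x - f 0)
    _ ≤ |f 0| * (1 + |x|) ^ (m + 1) + C * (1 + |x|) ^ m * (1 + |x|) := by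
        gcongr
        · exact le_mul_of_one_le_right (abs_nonneg _) hpow
        · exact hincr.trans (by gcongr; simp)
    _ = (|f 0| + C) * (1 + |x|) ^ (m + 1) := by ring

lemma integrable_gaussianReal (hf : PolyGrowth f) (hcont : Continuous f) (μ : ℝ) (v : ℝ≥0) :
    Integrable f (gaussianReal μ v) := by
  obtain ⟨C, -, m, hbound⟩ := hf
  exact ((integrable_one_add_norm_pow _ m).const_mul C).mono' hcont.aestronglyMeasurable
    (ae_of_all _ hbound)

end PolyGrowth

lemma integral_comp_affine_mul_self {f : ℝ → ℝ} (hf' : PolyGrowth (deriv f))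
    (cf : ContDiff ℝ 1 f) (a b : ℝ) :
    ∫ x, f (a + b * x) * x ∂gaussianReal 0 1 =
      b * ∫ x, deriv f (a + b * x) ∂gaussianReal 0 1 := by
  have df : Differentiable ℝ f := cf.differentiable one_ne_zero
  have hcomp : PolyGrowth fun x ↦ f (a + b * x) := (PolyGrowth.of_deriv df hf').comp (.affine a b)
  have hcomp' : PolyGrowth fun x ↦ deriv f (a + b * x) := hf'.comp (.affine a b)
  have ccomp : Continuous fun x ↦ f (a + b * x) := by fun_prop
  have hderiv (x : ℝ) : HasDerivAt (fun x ↦ f (a + b * x)) (b * deriv f (a + b * x)) x :=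
    ((df _).hasDerivAt.comp x (((hasDerivAt_id x).const_mul b).const_add a)).congr_deriv
      (by simp [mul_comm])
  have hstein := integral_mul_sub_mean_gaussianReal (μ := 0) (v := 1) hderiv
    (hcomp.integrable_gaussianReal ccomp 0 1)
    ((hcomp'.integrable_gaussianReal (by fun_prop) 0 1).const_mul b)
    (by simpa only [sub_zero] using (hcomp.mul .id).integrable_gaussianReal (by fun_prop) 0 1)
  simpa only [sub_zero, NNReal.coe_one, one_mul, integral_const_mul] using hstein

section Rotation

section NormedSpace

variable {E : Type*} [NormedAddCommGroup E] [NormedSpace ℝ E]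

lemma hasDerivAt_fst_rotation (p : E × E) (θ : ℝ) :
    HasDerivAt (fun θ ↦ (rot θ p).1) (rot θ p).2 θ :=
  ((Real.hasDerivAt_cos θ).smul_const p.1).add ((Real.hasDerivAt_sin θ).smul_const p.2)

lemma rotation_neg_rotation (θ : ℝ) (p : E × E) : rot (-θ) (rot θ p) = p := by
  ext <;> simp only [ContinuousLinearMap.rotation_apply, Real.cos_neg, Real.sin_neg] <;>
    match_scalars <;> linarith [Real.sin_sq_add_cos_sq θ]

lemma rotation_rotation_neg (θ : ℝ) (p : E × E) : rot θ (rot (-θ) p) = p := by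
  simpa only [neg_neg] using rotation_neg_rotation (-θ) p

lemma norm_rotation_apply_le (θ : ℝ) (p : E × E) : ‖rot θ p‖ ≤ 2 * ‖p‖ := by
  have hcombo (a b : ℝ) (ha : |a| ≤ 1) (hb : |b| ≤ 1) : ‖a • p.1 + b • p.2‖ ≤ 2 * ‖p‖ :=
    calc ‖a • p.1 + b • p.2‖ ≤ |a| * ‖p.1‖ + |b| * ‖p.2‖ := by
          simpa only [norm_smul, Real.norm_eq_abs] using norm_add_le (a • p.1) (b • p.2)
      _ ≤ 1 * ‖p‖ + 1 * ‖p‖ := by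
          gcongr
          exacts [norm_fst_le p, norm_snd_le p]
      _ = 2 * ‖p‖ := by ring
  exact max_le (hcombo _ _ (Real.abs_cos_le_one θ) (Real.abs_sin_le_one θ))
    (hcombo _ _ (by simpa using Real.abs_sin_le_one θ) (Real.abs_cos_le_one θ))

section CenteredGaussian

variable [CompleteSpace E] [SecondCountableTopology E] [MeasurableSpace E] [BorelSpace E]
  {μ : Measure E} [IsGaussian μ]

lemma measurePreserving_rotation (hμ : μ[id] = 0) (θ : ℝ) :
    MeasurePreserving (rot θ) (μ.prod μ) (μ.prod μ) :=
  ⟨(rot θ).continuous.measurable, IsGaussian.map_rotation_eq_self hμ θ⟩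

lemma integral_rotation_eq {G : Type*} [NormedAddCommGroup G] [NormedSpace ℝ G]
    {F : E × E → E × E → G} {θ : ℝ} (hμ : μ[id] = 0)
    (hF : AEStronglyMeasurable (fun q ↦ F (rot (-θ) q) q) (μ.prod μ)) :
    ∫ p, F p (rot θ p) ∂μ.prod μ = ∫ q, F (rot (-θ) q) q ∂μ.prod μ := by
  have hrot := measurePreserving_rotation hμ θ
  conv_rhs => rw [← hrot.map_eq]
  rw [integral_map hrot.aemeasurable (hrot.map_eq.symm ▸ hF)]
  simp only [rotation_neg_rotation]

end CenteredGaussian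

end NormedSpace

variable {f g h : ℝ → ℝ}

lemma PolyGrowth.exists_integrable_bound_rotation
    (hf : PolyGrowth f) (hg : PolyGrowth g) (hh : PolyGrowth h) :
    ∃ b : ℝ × ℝ → ℝ, Integrable b γ² ∧
      ∀ θ p, ‖f p.1 * (g (rot θ p).1 * h (rot θ p).2)‖ ≤ b p := by
  obtain ⟨A, hA, k, hf⟩ := hf
  obtain ⟨B, hB, m, hg⟩ := hg
  obtain ⟨C, hC, n, hh⟩ := hh
  refine ⟨fun p ↦ A * (B * C) * 2 ^ (m + n) * (1 + ‖p‖) ^ (k + (m + n)),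
    (integrable_one_add_norm_pow _ _).const_mul _, fun θ p ↦ ?_⟩
  have hrot := norm_rotation_apply_le θ p
  have hfst : 1 + |(rot θ p).1| ≤ 2 * (1 + ‖p‖) := by
    linarith [(norm_fst_le (rot θ p)).trans hrot, Real.norm_eq_abs (rot θ p).1]
  have hsnd : 1 + |(rot θ p).2| ≤ 2 * (1 + ‖p‖) := by
    linarith [(norm_snd_le (rot θ p)).trans hrot, Real.norm_eq_abs (rot θ p).2]
  calc ‖f p.1 * (g (rot θ p).1 * h (rot θ p).2)‖
      = |f p.1| * (|g (rot θ p).1| * |h (rot θ p).2|) := by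
        simp only [norm_mul, Real.norm_eq_abs]
    _ ≤ (A * (1 + ‖p‖) ^ k) * ((B * (2 * (1 + ‖p‖)) ^ m) * (C * (2 * (1 + ‖p‖)) ^ n)) := by
        gcongr
        · exact (hf _).trans (by gcongr; exact norm_fst_le p)
        · exact (hg _).trans (by gcongr)
        · exact (hh _).trans (by gcongr)
    _ = A * (B * C) * 2 ^ (m + n) * (1 + ‖p‖) ^ (k + (m + n)) := by
        rw [mul_pow, mul_pow]
        ring

lemma PolyGrowth.integrable_mul_rotation
    (hf : PolyGrowth f) (hg : PolyGrowth g) (hh : PolyGrowth h)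
    (cf : Continuous f) (cg : Continuous g) (ch : Continuous h) (θ : ℝ) :
    Integrable (fun p ↦ f p.1 * (g (rot θ p).1 * h (rot θ p).2)) γ² := by
  obtain ⟨b, hb, hle⟩ := hf.exists_integrable_bound_rotation hg hh
  exact hb.mono' (by fun_prop : Continuous _).aestronglyMeasurable (ae_of_all _ (hle θ))

end Rotation

section RotCorr

variable {f g : ℝ → ℝ}

/-- The correlation `𝔼 f(X) g(Z)` of a standard Gaussian pair with `𝔼 XZ = cos θ`, realised by
letting `Z` be the first coordinate of the independent pair `(X, Y)` rotated by `θ`. The angle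
`θ` replaces `ρ = cos θ` to avoid the singularity of `√(1 - ρ ^ 2)` at `ρ = ±1`. -/
noncomputable def rotCorr (f g : ℝ → ℝ) (θ : ℝ) : ℝ :=
  ∫ p, f p.1 * g (rot θ p).1 ∂γ²

lemma integrable_rotCorr (hf : PolyGrowth f) (hg : PolyGrowth g) (cf : Continuous f)
    (cg : Continuous g) (θ : ℝ) : Integrable (fun p ↦ f p.1 * g (rot θ p).1) γ² := by
  simpa only [mul_one] using
    hf.integrable_mul_rotation hg (.const 1) cf cg continuous_const θ

lemma continuous_rotCorr (hf : PolyGrowth f) (hg : PolyGrowth g) (cf : Continuous f)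
    (cg : Continuous g) : Continuous (rotCorr f g) := by
  obtain ⟨b, hb, hle⟩ := hf.exists_integrable_bound_rotation hg (.const 1)
  simp only [mul_one] at hle
  have crot (p : ℝ × ℝ) : Continuous fun θ ↦ (rot θ p).1 :=
    continuous_iff_continuousAt.2 fun θ ↦ (hasDerivAt_fst_rotation p θ).continuousAt
  exact continuous_of_dominated
    (fun θ ↦ (integrable_rotCorr hf hg cf cg θ).aestronglyMeasurable)
    (fun θ ↦ ae_of_all _ (hle θ)) hb
    (ae_of_all _ fun p ↦ continuous_const.mul (cg.comp (crot p)))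

lemma hasDerivAt_rotCorr_integral (hf : PolyGrowth f) (hg' : PolyGrowth (deriv g))
    (cf : Continuous f) (cg : ContDiff ℝ 1 g) (θ : ℝ) :
    HasDerivAt (rotCorr f g) (∫ p, f p.1 * (deriv g (rot θ p).1 * (rot θ p).2) ∂γ²) θ := by
  have dg : Differentiable ℝ g := cg.differentiable one_ne_zero
  have hg : PolyGrowth g := .of_deriv dg hg'
  obtain ⟨b, hb, hle⟩ := hf.exists_integrable_bound_rotation hg' .id
  refine (hasDerivAt_integral_of_dominated_loc_of_deriv_le (s := univ) (bound := b)
    (F' := fun θ p ↦ f p.1 * (deriv g (rot θ p).1 * (rot θ p).2)) univ_mem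
    (Eventually.of_forall fun θ ↦ (integrable_rotCorr hf hg cf cg.continuous θ).1)
    (integrable_rotCorr hf hg cf cg.continuous θ)
    (hf.integrable_mul_rotation hg' .id cf cg.continuous_deriv_one continuous_id θ).1
    (ae_of_all _ fun p θ _ ↦ hle θ p) hb (ae_of_all _ fun p θ _ ↦ ?_)).2
  exact ((dg _).hasDerivAt.comp θ (hasDerivAt_fst_rotation p θ)).const_mul (f p.1)

lemma integral_mul_snd_rotation (hf' : PolyGrowth (deriv f)) (hg : PolyGrowth g)
    (cf : ContDiff ℝ 1 f) (cg : Continuous g) (θ : ℝ) :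
    ∫ p, f p.1 * (g (rot θ p).1 * (rot θ p).2) ∂γ² = -Real.sin θ * rotCorr (deriv f) g θ := by
  have hf : PolyGrowth f := .of_deriv (cf.differentiable one_ne_zero) hf'
  have cf' : Continuous (deriv f) := cf.continuous_deriv_one
  have hμ : (gaussianReal 0 1)[id] = 0 := by simp
  have hrot := measurePreserving_rotation hμ (-θ)
  have hint : Integrable (fun q ↦ f (rot (-θ) q).1 * (g q.1 * q.2)) γ² := by
    simpa only [Function.comp_def, rotation_rotation_neg] using hrot.integrable_comp_of_integrable
      (hf.integrable_mul_rotation hg .id cf.continuous cg continuous_id θ)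
  have hint' : Integrable (fun q ↦ deriv f (rot (-θ) q).1 * g q.1) γ² := by
    simpa only [Function.comp_def, rotation_rotation_neg] using hrot.integrable_comp_of_integrable
      (integrable_rotCorr hf' hg cf' cg θ)
  have hstein (z : ℝ) : ∫ w, f (rot (-θ) (z, w)).1 * (g z * w) ∂gaussianReal 0 1 =
      -Real.sin θ * ∫ w, deriv f (rot (-θ) (z, w)).1 * g z ∂gaussianReal 0 1 := by
    have := integral_comp_affine_mul_self hf' cf (Real.cos θ * z) (-Real.sin θ)
    simp only [ContinuousLinearMap.rotation_apply, Real.cos_neg, Real.sin_neg, smul_eq_mul,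
      mul_left_comm _ (g z), integral_const_mul, integral_mul_const, this]
    ring
  calc ∫ p, f p.1 * (g (rot θ p).1 * (rot θ p).2) ∂γ²
      = ∫ q, f (rot (-θ) q).1 * (g q.1 * q.2) ∂γ² :=
        integral_rotation_eq (F := fun p q ↦ f p.1 * (g q.1 * q.2)) hμ hint.1
    _ = -Real.sin θ * ∫ q, deriv f (rot (-θ) q).1 * g q.1 ∂γ² := by
        rw [integral_prod _ hint, integral_prod _ hint', ← integral_const_mul]
        simp only [hstein]
    _ = -Real.sin θ * rotCorr (deriv f) g θ := by
        rw [rotCorr, integral_rotation_eq (F := fun p q ↦ deriv f p.1 * g q.1) hμ hint'.1]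

theorem hasDerivAt_rotCorr (hf' : PolyGrowth (deriv f)) (hg' : PolyGrowth (deriv g))
    (cf : ContDiff ℝ 1 f) (cg : ContDiff ℝ 1 g) (θ : ℝ) :
    HasDerivAt (rotCorr f g) (-Real.sin θ * rotCorr (deriv f) (deriv g) θ) θ := by
  rw [← integral_mul_snd_rotation hf' hg' cf cg.continuous_deriv_one]
  exact hasDerivAt_rotCorr_integral (.of_deriv (cf.differentiable one_ne_zero) hf') hg'
    cf.continuous cg θ

end RotCorr

section PhiCorr

variable {g : ℝ → ℝ}

lemma phiCorr_eq_rotCorr_arccos (hg : PolyGrowth g) (cg : Continuous g) {ρ : ℝ}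
    (hρ : ρ ∈ Icc (-1) 1) : phiCorr g ρ = rotCorr g g (Real.arccos ρ) := by
  rw [rotCorr, integral_prod _ (integrable_rotCorr hg hg cg cg _)]
  simp only [phiCorr, ContinuousLinearMap.rotation_apply, Real.cos_arccos hρ.1 hρ.2,
    Real.sin_arccos, smul_eq_mul]

lemma continuousOn_phiCorr (hg : PolyGrowth g) (cg : Continuous g) :
    ContinuousOn (phiCorr g) (Icc (-1) 1) :=
  ((continuous_rotCorr hg hg cg cg).comp Real.continuous_arccos).continuousOn.congr
    fun _ hρ ↦ phiCorr_eq_rotCorr_arccos hg cg hρ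

theorem hasDerivAt_phiCorr (hg' : PolyGrowth (deriv g)) (cg : ContDiff ℝ 1 g) {ρ : ℝ}
    (hρ : ρ ∈ Ioo (-1) 1) : HasDerivAt (phiCorr g) (phiCorr (deriv g) ρ) ρ := by
  have hg : PolyGrowth g := .of_deriv (cg.differentiable one_ne_zero) hg'
  have hlocal : phiCorr g =ᶠ[𝓝 ρ] rotCorr g g ∘ Real.arccos := by
    filter_upwards [Icc_mem_nhds hρ.1 hρ.2] with r hr
    exact phiCorr_eq_rotCorr_arccos hg cg.continuous hr
  have hsin : Real.sin (Real.arccos ρ) ≠ 0 :=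
    (Real.sin_pos_of_pos_of_lt_pi (Real.arccos_pos.2 hρ.2) (Real.arccos_lt_pi.2 hρ.1)).ne'
  have hchain := (hasDerivAt_rotCorr hg' hg' cg cg (Real.arccos ρ)).comp ρ
    (Real.hasDerivAt_arccos hρ.1.ne' hρ.2.ne)
  rw [phiCorr_eq_rotCorr_arccos hg' cg.continuous_deriv_one (Ioo_subset_Icc_self hρ)]
  refine (hchain.congr_of_eventuallyEq hlocal).congr_deriv ?_
  rw [← Real.sin_arccos]
  field_simp

lemma phiCorr_neg_one (g : ℝ → ℝ) :
    phiCorr g (-1) = ∫ x, g x * g (-x) ∂gaussianReal 0 1 := by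
  simp [phiCorr]

end PhiCorr

theorem antithetic_not_optimal_general (g : ℝ → ℝ) (hg : ContDiff ℝ 1 g)
    (h1 : PolyGrowth (deriv g))
    (hneg : ∫ x, deriv g x * deriv g (-x) ∂(gaussianReal 0 1) < 0) :
    ∃ ρ ∈ Ioc (-1 : ℝ) 1, phiCorr g ρ < phiCorr g (-1) := by
  have h0 : PolyGrowth g := .of_deriv (hg.differentiable one_ne_zero) h1
  have hcont : ContinuousWithinAt (phiCorr (deriv g)) (Ici (-1)) (-1) := by
    have := continuousOn_phiCorr h1 hg.continuous_deriv_one (-1) (by simp)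
    rwa [ContinuousWithinAt, nhdsWithin_Icc_eq_nhdsGE (by norm_num)] at this
  have hev : ∀ᶠ ρ in 𝓝[≥] (-1), phiCorr (deriv g) ρ < 0 :=
    hcont.eventually_lt_const (by rwa [phiCorr_neg_one])
  obtain ⟨u, hu, hderiv_neg⟩ :=
    (mem_nhdsGE_iff_exists_mem_Ioc_Ico_subset (show (-1 : ℝ) < 1 by norm_num)).1 hev
  have hanti : StrictAntiOn (phiCorr g) (Icc (-1) u) := by
    refine strictAntiOn_of_deriv_neg (convex_Icc _ _)
      ((continuousOn_phiCorr h0 hg.continuous).mono (Icc_subset_Icc_right hu.2)) fun ρ hρ ↦ ?_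
    rw [interior_Icc] at hρ
    rw [(hasDerivAt_phiCorr h1 hg ⟨hρ.1, hρ.2.trans_le hu.2⟩).deriv]
    exact hderiv_neg (Ioo_subset_Ico_self hρ)
  exact ⟨u, hu, hanti (left_mem_Icc.2 hu.1.le) (right_mem_Icc.2 hu.1.le) hu.1⟩

theorem antithetic_not_optimal (g : ℝ → ℝ) (hg : ContDiff ℝ 2 g)
    (h0 : PolyGrowth g) (h1 : PolyGrowth (deriv g)) (h2 : PolyGrowth (deriv (deriv g)))
    (hneg : ∫ x, deriv g x * deriv g (-x) ∂(gaussianReal 0 1) < 0) :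
    ∃ ρ ∈ Set.Ioc (-1 : ℝ) 1, phiCorr g ρ < phiCorr g (-1) :=
  antithetic_not_optimal_general g (hg.of_le one_le_two) h1 hneg
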